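/- Let R be a semilocal ring that is Prüfer in dimension zero, and suppose Jac R is a regular ideal and is the radical of a finitely generated ideal A. Let R* = R/(∩_{k>0} A^k). Then: (i) R* is a reduced ring with only finitely many minimal prime ideals; (ii) R* is Prüfer in dimension zero; (iii) each minimal prime ideal of R* is contained in a height one maximal ideal of R*; and (iv) each height one maximal ideal of R* contains exactly one nonmaximal prime ideal of R*. -/

import Mathlib

/-!
The idea is to reduce to one regular element `a` of `R` with `Jac R = √(a)` and then to do all the
geometry in `S = R* = R / ⋂ (a ^ k)`, where `⋂ (a ^ k) = 0`.

*Reduction.* Every prime over `A` contains `Jac R = √A`, a finite intersection of maximal ideals,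
so it is maximal; and `A` contains a power of the regular element of `Jac R`. Thus `A` is regular
and zero-dimensional, hence invertible, hence principal since `R` is semilocal: `A = (a)`. The
same argument makes every finitely generated ideal containing a power of `a` principal, and this
property passes to `S`, where `a` remains regular.

*Structure of `S`.* For a maximal ideal `M` let `Q_M` be the set of elements which, locally at `M`,
are divisible by every power of `a`. Principality of `(x, a ^ k)` shows that locally at `M` either
`x ∣ a ^ k` or `a ^ k ∣ x` (`local_dichotomy`); so every element outside `Q_M` locally divides a
power of `a`. It follows that `Q_M` is a nonmaximal prime inside `M` (`locKernel_isPrime`), and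
that it contains every prime inside `M` which misses `a` (`le_locKernel`), i.e. every nonmaximal
prime inside `M`. Finally `⋂ Q_M = 0`, a finite intersection. So `S` is reduced and its minimal
primes are among the `Q_M`; for a minimal prime `Q_M` the ideal `M` has height one; and if `M` has
height one, then `Q_M` is the only nonmaximal prime inside `M`.

A finitely generated zero-dimensional ideal of `S` contains a power of `a`, since each prime over
it is maximal; so it is generated by one element, which is regular because it divides a power of
`a`. Hence it is invertible.
-/

open scoped nonZeroDivisors

/-- A semilocal ring: a commutative ring with only finitely many maximal ideals. -/
def IsSemilocalRing (R : Type*) [CommRing R] : Prop := {I : Ideal R | I.IsMaximal}.Finite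

/-- An ideal `I` of `R` is invertible if `I · (R :_{Q(R)} I) = R`, where `Q(R)` is the
total quotient ring of `R` (the localization at the nonzerodivisors). -/
def Ideal.IsQInvertible {R : Type*} [CommRing R] (I : Ideal R) : Prop :=
  IsLocalization.coeSubmodule (Localization R⁰) I *
    (1 / IsLocalization.coeSubmodule (Localization R⁰) I) = 1

/-- A ring `R` is Prüfer in dimension zero if every finitely generated regular
zero-dimensional ideal of `R` is invertible. -/
def PruferInDimZero (R : Type*) [CommRing R] : Prop :=
  ∀ I : Ideal R, I.FG → (∃ r ∈ I, r ∈ R⁰) → ringKrullDim (R ⧸ I) ≤ 0 → I.IsQInvertible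

namespace PruferQuotient

/-! ### Prime ideals when `(x, a ^ k)` is always principal -/

section Structure

variable {S : Type*} [CommRing S]

/-- The kernel of `S → S_M / ⋂ a ^ k S_M`, described by elements: those `x` such that for each `k`
some multiple of `x` by an element outside `M` is divisible by `a ^ k`. -/
def locKernel (a : S) (M : Ideal S) [hM : M.IsPrime] : Ideal S where
  carrier := {x | ∀ k : ℕ, ∃ s, s ∉ M ∧ a ^ k ∣ s * x}
  zero_mem' := fun k => ⟨1, (Ideal.ne_top_iff_one M).1 hM.ne_top, by simp⟩
  add_mem' := by
    intro x y hx hy k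
    obtain ⟨s, hs, hsx⟩ := hx k
    obtain ⟨t, ht, hty⟩ := hy k
    refine ⟨s * t, fun h => (hM.mem_or_mem h).elim hs ht, ?_⟩
    have : s * t * (x + y) = t * (s * x) + s * (t * y) := by ring
    rw [this]
    exact dvd_add (hsx.mul_left _) (hty.mul_left _)
  smul_mem' := by
    intro c x hx k
    obtain ⟨s, hs, hsx⟩ := hx k
    refine ⟨s, hs, ?_⟩
    have : s * (c • x) = c * (s * x) := by simp only [smul_eq_mul]; ring
    rw [this]
    exact hsx.mul_left _

theorem mem_locKernel {a : S} {M : Ideal S} [M.IsPrime] {x : S} :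
    x ∈ locKernel a M ↔ ∀ k : ℕ, ∃ s, s ∉ M ∧ a ^ k ∣ s * x := Iff.rfl

variable {a : S}

/-- Since `(x, a ^ k)` is generated by a regular element, one of `x` and `a ^ k` divides the other
locally at any prime `M`. -/
theorem local_dichotomy (ha : a ∈ S⁰)
    (H : ∀ (x : S) (k : ℕ), ∃ b, Ideal.span {x, a ^ k} = Ideal.span {b})
    (M : Ideal S) [hM : M.IsPrime] (x : S) (k : ℕ) :
    (∃ s, s ∉ M ∧ x ∣ s * a ^ k) ∨ ∃ s, s ∉ M ∧ a ^ k ∣ s * x := by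
  obtain ⟨b, hb⟩ := H x k
  obtain ⟨x', hx'⟩ : b ∣ x := by
    rw [← Ideal.mem_span_singleton, ← hb]; exact Ideal.subset_span (by simp)
  obtain ⟨c, hc⟩ : b ∣ a ^ k := by
    rw [← Ideal.mem_span_singleton, ← hb]; exact Ideal.subset_span (by simp)
  have hbm : b ∈ Ideal.span {x, a ^ k} := by
    rw [hb]; exact Ideal.mem_span_singleton_self b
  obtain ⟨α, β, hαβ⟩ := Ideal.mem_span_pair.1 hbm
  have hak : a ^ k ∈ S⁰ := pow_mem ha k
  have hbreg : b ∈ S⁰ := by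
    rw [hc] at hak
    exact (mul_mem_nonZeroDivisors.1 hak).1
  have hone : α * x' + β * c = 1 := by
    have h0 : (α * x' + β * c - 1) * b = 0 := by
      linear_combination hαβ - α * hx' - β * hc
    exact sub_eq_zero.1 ((mul_right_mem_nonZeroDivisors_eq_zero_iff hbreg).1 h0)
  by_cases h1 : x' ∈ M
  · refine Or.inr ⟨c, fun h2 => (Ideal.ne_top_iff_one M).1 hM.ne_top ?_, ⟨x', ?_⟩⟩
    · rw [← hone]; exact M.add_mem (M.mul_mem_left _ h1) (M.mul_mem_left _ h2)
    · linear_combination c * hx' - x' * hc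
  · exact Or.inl ⟨x', h1, ⟨c, by linear_combination x' * hc - c * hx'⟩⟩

theorem exists_dvd_of_notMem (ha : a ∈ S⁰)
    (H : ∀ (x : S) (k : ℕ), ∃ b, Ideal.span {x, a ^ k} = Ideal.span {b})
    (M : Ideal S) [hM : M.IsPrime] {x : S} (hx : x ∉ locKernel a M) :
    ∃ k : ℕ, ∃ s, s ∉ M ∧ x ∣ s * a ^ k := by
  rw [mem_locKernel, not_forall] at hx
  obtain ⟨k, hk⟩ := hx
  exact ⟨k, (local_dichotomy ha H M x k).resolve_right hk⟩

theorem self_notMem_locKernel (ha : a ∈ S⁰) (M : Ideal S) [hM : M.IsPrime] (haM : a ∈ M) :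
    a ∉ locKernel a M := by
  intro h
  obtain ⟨s, hs, c, hc⟩ := h 2
  have h0 : (s - a * c) * a = 0 := by linear_combination hc
  have := sub_eq_zero.1 ((mul_right_mem_nonZeroDivisors_eq_zero_iff ha).1 h0)
  exact hs (this ▸ M.mul_mem_right _ haM)

theorem locKernel_le (M : Ideal S) [hM : M.IsPrime] (haM : a ∈ M) : locKernel a M ≤ M := by
  intro x hx
  obtain ⟨s, hs, hd⟩ := hx 1
  rw [pow_one] at hd
  exact (hM.mem_or_mem (M.mem_of_dvd hd haM)).resolve_left hs

theorem locKernel_isPrime (ha : a ∈ S⁰)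
    (H : ∀ (x : S) (k : ℕ), ∃ b, Ideal.span {x, a ^ k} = Ideal.span {b})
    (M : Ideal S) [hM : M.IsPrime] (haM : a ∈ M) : (locKernel a M).IsPrime := by
  refine ⟨fun h => self_notMem_locKernel ha M haM (h ▸ Submodule.mem_top), ?_⟩
  intro x y hxy
  by_contra! hcon
  obtain ⟨j, s, hs, u, hu⟩ := exists_dvd_of_notMem ha H M hcon.1
  obtain ⟨k, t, ht, v, hv⟩ := exists_dvd_of_notMem ha H M hcon.2
  obtain ⟨w, hw, z, hz⟩ := hxy (j + k + 1)
  -- Cancelling `a ^ (j + k)` shows that a product of elements outside `M` is a multiple of `a`.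
  have h0 : (w * s * t - a * (z * u * v)) * a ^ (j + k) = 0 := by
    rw [pow_add]
    have hz' : w * (x * y) = a ^ j * a ^ k * a * z := by rw [hz]; ring
    linear_combination w * t * a ^ k * hu + w * x * u * hv + u * v * hz'
  have h1 := sub_eq_zero.1
    ((mul_right_mem_nonZeroDivisors_eq_zero_iff (pow_mem ha (j + k))).1 h0)
  have h2 : w * s * t ∈ M := h1 ▸ M.mul_mem_right _ haM
  exact (hM.mem_or_mem h2).elim (fun h => (hM.mem_or_mem h).elim hw hs) ht

theorem le_locKernel (ha : a ∈ S⁰)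
    (H : ∀ (x : S) (k : ℕ), ∃ b, Ideal.span {x, a ^ k} = Ideal.span {b})
    (M : Ideal S) [hM : M.IsPrime] {P : Ideal S} (hP : P.IsPrime) (hPM : P ≤ M)
    (haP : a ∉ P) : P ≤ locKernel a M := by
  intro x hx
  by_contra hcon
  obtain ⟨k, s, hs, hd⟩ := exists_dvd_of_notMem ha H M hcon
  rcases hP.mem_or_mem (P.mem_of_dvd hd hx) with h | h
  · exact hs (hPM h)
  · exact haP (hP.mem_of_pow_mem k h)

/-- The intersection of all `Q_M` is contained in `⋂ (a ^ k) = 0`, because divisibility by `a ^ k`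
is a local property. -/
theorem eq_zero_of_forall_mem (hbot : ∀ x : S, (∀ k : ℕ, a ^ k ∣ x) → x = 0) {x : S}
    (hx : ∀ (M : Ideal S) (hM : M.IsMaximal), x ∈ @locKernel S _ a M hM.isPrime) : x = 0 := by
  refine hbot x fun k => ?_
  by_contra hk
  let I : Ideal S := Submodule.comap (LinearMap.mulRight S x) (Ideal.span {a ^ k})
  have hI : ∀ s, s ∈ I ↔ a ^ k ∣ s * x := fun s => by
    simp [I, Ideal.mem_span_singleton]
  have hne : I ≠ ⊤ := fun h => hk (by simpa using (hI 1).1 (h ▸ Submodule.mem_top))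
  obtain ⟨M, hM, hIM⟩ := Ideal.exists_le_maximal I hne
  obtain ⟨s, hs, hd⟩ := hx M hM k
  exact hs (hIM ((hI s).2 hd))

/-- The primes of a semilocal ring with a regular element `a` in the Jacobson radical such that all primes
containing `a` are maximal, `⋂ (a ^ k) = 0` and all ideals `(x, a ^ k)` are principal. -/
theorem structure_of_dichotomy (hsl : IsSemilocalRing S) (ha : a ∈ S⁰)
    (haM : ∀ M : Ideal S, M.IsMaximal → a ∈ M)
    (hmax : ∀ P : Ideal S, P.IsPrime → a ∈ P → P.IsMaximal)
    (H : ∀ (x : S) (k : ℕ), ∃ b, Ideal.span {x, a ^ k} = Ideal.span {b})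
    (hbot : ∀ x : S, (∀ k : ℕ, a ^ k ∣ x) → x = 0) :
    IsReduced S ∧ (minimalPrimes S).Finite ∧
    (∀ P ∈ minimalPrimes S, ∃ (N : Ideal S) (hN : N.IsMaximal),
        Order.height (⟨N, hN.isPrime⟩ : PrimeSpectrum S) = 1 ∧ P ≤ N) ∧
    (∀ (N : Ideal S) (hN : N.IsMaximal),
      Order.height (⟨N, hN.isPrime⟩ : PrimeSpectrum S) = 1 →
        ∃! P : Ideal S, P.IsPrime ∧ ¬ P.IsMaximal ∧ P ≤ N) := by
  classical
  have hprime : ∀ (M : Ideal S) (hM : M.IsMaximal),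
      (@locKernel S _ a M hM.isPrime).IsPrime := fun M hM =>
    @locKernel_isPrime S _ a ha H M hM.isPrime (haM M hM)
  have hnot : ∀ (M : Ideal S) (hM : M.IsMaximal), a ∉ @locKernel S _ a M hM.isPrime :=
    fun M hM => @self_notMem_locKernel S _ a ha M hM.isPrime (haM M hM)
  have hle : ∀ (M : Ideal S) (hM : M.IsMaximal), @locKernel S _ a M hM.isPrime ≤ M :=
    fun M hM => @locKernel_le S _ a M hM.isPrime (haM M hM)
  have hge : ∀ (M : Ideal S) (hM : M.IsMaximal) (P : Ideal S), P.IsPrime → P ≤ M → a ∉ P →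
      P ≤ @locKernel S _ a M hM.isPrime :=
    fun M hM P hP hPM haP => @le_locKernel S _ a ha H M hM.isPrime P hP hPM haP
  have hltM : ∀ (M : Ideal S) (hM : M.IsMaximal),
      (⟨_, hprime M hM⟩ : PrimeSpectrum S) < ⟨M, hM.isPrime⟩ := fun M hM =>
    lt_of_le_of_ne (hle M hM) fun h =>
      hnot M hM ((congrArg PrimeSpectrum.asIdeal h).ge (haM M hM))
  -- Minimal primes are among the `Q_M`, because the finite intersection `⋂ Q_M` is zero.
  have hmin : ∀ P ∈ minimalPrimes S, ∃ (M : Ideal S) (hM : M.IsMaximal),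
      P = @locKernel S _ a M hM.isPrime := by
    intro P hP
    have : Fintype {I : Ideal S | I.IsMaximal} := Set.Finite.fintype hsl
    have h0 : (Finset.univ : Finset {I : Ideal S | I.IsMaximal}).inf
        (fun M => @locKernel S _ a M.1 (Ideal.IsMaximal.isPrime M.2)) ≤ P := by
      intro x hx
      rw [Submodule.mem_finsetInf] at hx
      rw [eq_zero_of_forall_mem hbot (fun M hM => hx ⟨M, hM⟩ (Finset.mem_univ _))]
      exact P.zero_mem
    obtain ⟨M, -, hMP⟩ := (hP.1.1.inf_le').1 h0
    exact ⟨M.1, M.2, le_antisymm (hP.2 ⟨hprime M.1 M.2, bot_le⟩ hMP) hMP⟩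
  refine ⟨⟨fun x hx => ?_⟩, ?_, ?_, ?_⟩
  · obtain ⟨n, hn⟩ := hx
    refine eq_zero_of_forall_mem hbot fun M hM => ?_
    exact (hprime M hM).mem_of_pow_mem n (hn ▸ Submodule.zero_mem _)
  · have : Finite {I : Ideal S | I.IsMaximal} := hsl
    refine (Set.finite_range (fun M : {I : Ideal S | I.IsMaximal} =>
      @locKernel S _ a M.1 (Ideal.IsMaximal.isPrime M.2))).subset ?_
    intro P hP
    obtain ⟨M, hM, rfl⟩ := hmin P hP
    exact ⟨⟨M, hM⟩, rfl⟩
  · intro P hP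
    obtain ⟨M, hM, rfl⟩ := hmin P hP
    refine ⟨M, hM, le_antisymm ?_ ?_, hle M hM⟩
    · refine not_lt.1 fun h => ?_
      obtain ⟨y, z, hzy, hyM⟩ := Order.one_lt_height_iff.1 h
      have hay : a ∉ y.asIdeal := fun hay =>
        hyM.ne (PrimeSpectrum.ext ((hmax _ y.2 hay).eq_of_le hM.ne_top hyM.le))
      have h1 : y.asIdeal ≤ _ := hge M hM _ y.2 hyM.le hay
      have h2 := hP.2 ⟨z.2, bot_le⟩ (le_trans hzy.le h1)
      exact absurd (le_trans h1 h2) (not_le_of_gt hzy)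
    · exact Order.one_le_iff_pos.2 (Order.height_pos.2 fun h => (hltM M hM).not_ge (h (hltM M hM).le))
  · intro N hN hht
    refine ⟨_, ⟨hprime N hN, fun h => hnot N hN (haM _ h), hle N hN⟩, ?_⟩
    rintro P ⟨hP, hPmax, hPN⟩
    have h1 := hge N hN P hP hPN fun h => hPmax (hmax P hP h)
    by_contra hne
    have hlt : (⟨P, hP⟩ : PrimeSpectrum S) < ⟨_, hprime N hN⟩ :=
      lt_of_le_of_ne h1 fun h => hne (congrArg PrimeSpectrum.asIdeal h)
    exact absurd hht (Order.one_lt_height_iff.2 ⟨_, _, hlt, hltM N hN⟩).ne'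

end Structure

/-! ### Invertible and zero-dimensional ideals of a semilocal ring -/

section Invertible

variable {R : Type*} [CommRing R]

theorem isQInvertible_span_singleton {b : R} (hb : b ∈ R⁰) :
    (Ideal.span {b}).IsQInvertible := by
  refine le_antisymm Submodule.mul_one_div_le_one ?_
  let β := IsLocalization.mk' (Localization R⁰) (1 : R) (⟨b, hb⟩ : R⁰)
  have hβ : algebraMap R (Localization R⁰) b * β = 1 := by
    rw [mul_comm]
    simp [β]
  rw [Submodule.one_le, ← hβ]
  refine Submodule.mul_mem_mul
    ((IsLocalization.mem_coeSubmodule _ _).2 ⟨b, Ideal.mem_span_singleton_self b, rfl⟩) ?_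
  rw [Submodule.mem_div_iff_forall_mul_mem]
  intro y hy
  obtain ⟨x, hx, rfl⟩ := (IsLocalization.mem_coeSubmodule _ _).1 hy
  obtain ⟨c, rfl⟩ := Ideal.mem_span_singleton.1 hx
  rw [Submodule.mem_one]
  exact ⟨c, by rw [map_mul]; linear_combination (-algebraMap R (Localization R⁰) c) * hβ⟩

/-- A regular invertible ideal of a semilocal ring is principal. -/
theorem exists_eq_span_of_isQInvertible (hsl : IsSemilocalRing R) {I : Ideal R}
    (hreg : ∃ r ∈ I, r ∈ R⁰) (hI : I.IsQInvertible) : ∃ b, I = Ideal.span {b} := by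
  obtain ⟨r, hrI, hr⟩ := hreg
  -- Multiplication by `r ∈ I` maps `(R : I)` into `R`, so `(R : I)` is a fractional ideal.
  let I' : FractionalIdeal R⁰ (Localization R⁰) :=
    ⟨1 / IsLocalization.coeSubmodule (Localization R⁰) I, r, hr, fun y hy => by
      have h := (Submodule.mem_div_iff_forall_mul_mem.1 hy) _
        ((IsLocalization.mem_coeSubmodule _ _).2 ⟨r, hrI, rfl⟩)
      rw [Submodule.mem_one] at h
      obtain ⟨c, hc⟩ := h
      exact ⟨c, by rw [hc, Algebra.smul_def, mul_comm]⟩⟩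
  have hinv : (I : FractionalIdeal R⁰ (Localization R⁰)) * I' = 1 := by
    rw [← FractionalIdeal.coeToSubmodule_inj, FractionalIdeal.coe_mul,
      FractionalIdeal.coe_coeIdeal, FractionalIdeal.coe_one]
    exact hI
  have hp := FractionalIdeal.isPrincipal.of_finite_maximals_of_inv le_rfl hsl _ _ hinv
  have hp' : I.IsPrincipal := (IsLocalization.coeSubmodule_isPrincipal
    (Localization R⁰) le_rfl).1 hp
  obtain ⟨b, hb⟩ := hp'
  exact ⟨b, hb⟩

theorem isMaximal_of_comap {T : Type*} [CommRing T] {f : R →+* T} (hf : Function.Surjective f)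
    {P : Ideal T} (hP : P.IsPrime) (h : (P.comap f).IsMaximal) : P.IsMaximal := by
  have := Ideal.map_eq_top_or_isMaximal_of_surjective f hf h
  rw [Ideal.map_comap_of_surjective f hf] at this
  exact this.resolve_left hP.ne_top

theorem ringKrullDim_quotient_le_zero_iff {I : Ideal R} :
    ringKrullDim (R ⧸ I) ≤ 0 ↔ ∀ P : Ideal R, P.IsPrime → I ≤ P → P.IsMaximal := by
  have h : ringKrullDim (R ⧸ I) ≤ 0 ↔ Ring.KrullDimLE 0 (R ⧸ I) := by
    rw [Ring.krullDimLE_iff]; simp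
  rw [h, Ring.krullDimLE_zero_iff]
  constructor
  · intro h P hP hIP
    have hker : RingHom.ker (Ideal.Quotient.mk I) ≤ P := by rwa [Ideal.mk_ker]
    have := h _ (Ideal.map_isPrime_of_surjective Ideal.Quotient.mk_surjective hker)
    have h2 := Ideal.comap_isMaximal_of_surjective (Ideal.Quotient.mk I)
      Ideal.Quotient.mk_surjective (K := P.map (Ideal.Quotient.mk I))
    rwa [Ideal.comap_map_of_surjective' _ Ideal.Quotient.mk_surjective,
      sup_eq_left.2 hker] at h2
  · intro h P hP
    have h1 : (P.comap (Ideal.Quotient.mk I)).IsMaximal := by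
      refine h _ (Ideal.comap_isPrime _ _) ?_
      exact Ideal.mk_ker.ge.trans (Ideal.ker_le_comap _)
    exact isMaximal_of_comap Ideal.Quotient.mk_surjective hP h1

/-- In a semilocal ring, a prime containing the Jacobson radical is maximal. -/
theorem isMaximal_of_jacobson_le (hsl : IsSemilocalRing R) {P : Ideal R} (hP : P.IsPrime)
    (h : (⊥ : Ideal R).jacobson ≤ P) : P.IsMaximal := by
  have : Fintype {I : Ideal R | I.IsMaximal} := Set.Finite.fintype hsl
  have h0 : (Finset.univ : Finset {I : Ideal R | I.IsMaximal}).inf (fun M => M.1) ≤ P := by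
    intro x hx
    rw [Submodule.mem_finsetInf] at hx
    exact h (Submodule.mem_sInf.2 fun M hM => hx ⟨M, hM.2⟩ (Finset.mem_univ _))
  obtain ⟨M, -, hM⟩ := (hP.inf_le').1 h0
  exact (Ideal.IsMaximal.eq_of_le M.2 hP.ne_top hM) ▸ M.2

end Invertible

end PruferQuotient

/-! ### The quotient by the powers of `A` -/

open PruferQuotient

/-- Let `R` be a semilocal ring that is Prüfer in dimension zero, whose Jacobson radical is
regular and the radical of a finitely generated ideal `A`, and let `R* = R/(∩_{k>0} A^k)`.
Then (i) `R*` is reduced with finitely many minimal primes; (ii) `R*` is Prüfer in dimension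
zero; (iii) each minimal prime of `R*` is contained in a height one maximal ideal of `R*`;
(iv) each height one maximal ideal of `R*` contains exactly one nonmaximal prime ideal. -/
theorem prufer_in_dim_zero_quotient {R : Type*} [CommRing R]
    (hsl : IsSemilocalRing R) (hpruf : PruferInDimZero R)
    (hreg : ∃ r ∈ (⊥ : Ideal R).jacobson, r ∈ R⁰)
    (A : Ideal R) (hA : A.FG) (hrad : (⊥ : Ideal R).jacobson = A.radical) :
    IsReduced (R ⧸ ⨅ k : ℕ, A ^ (k + 1)) ∧
    (minimalPrimes (R ⧸ ⨅ k : ℕ, A ^ (k + 1))).Finite ∧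
    PruferInDimZero (R ⧸ ⨅ k : ℕ, A ^ (k + 1)) ∧
    (∀ P ∈ minimalPrimes (R ⧸ ⨅ k : ℕ, A ^ (k + 1)),
      ∃ (N : Ideal (R ⧸ ⨅ k : ℕ, A ^ (k + 1))) (hN : N.IsMaximal),
        Order.height (⟨N, hN.isPrime⟩ : PrimeSpectrum (R ⧸ ⨅ k : ℕ, A ^ (k + 1))) = 1 ∧
        P ≤ N) ∧
    (∀ (N : Ideal (R ⧸ ⨅ k : ℕ, A ^ (k + 1))) (hN : N.IsMaximal),
      Order.height (⟨N, hN.isPrime⟩ : PrimeSpectrum (R ⧸ ⨅ k : ℕ, A ^ (k + 1))) = 1 →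
        ∃! P : Ideal (R ⧸ ⨅ k : ℕ, A ^ (k + 1)), P.IsPrime ∧ ¬ P.IsMaximal ∧ P ≤ N) := by
  have hJmax : ∀ M : Ideal R, M.IsMaximal → (⊥ : Ideal R).jacobson ≤ M := fun M hM =>
    sInf_le ⟨bot_le, hM⟩
  have hAmax : ∀ P : Ideal R, P.IsPrime → A ≤ P → P.IsMaximal := fun P hP hAP =>
    isMaximal_of_jacobson_le hsl hP (hrad ▸ hP.radical_le_iff.2 hAP)
  have hAM : ∀ M : Ideal R, M.IsMaximal → A ≤ M := fun M hM =>
    Ideal.le_radical.trans (hrad ▸ hJmax M hM)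
  obtain ⟨r, hrJ, hr⟩ := hreg
  have hAreg : ∃ r ∈ A, r ∈ R⁰ := by
    rw [hrad] at hrJ
    obtain ⟨n, hn⟩ := hrJ
    exact ⟨r ^ n, hn, pow_mem hr n⟩
  obtain ⟨a, rfl⟩ := exists_eq_span_of_isQInvertible hsl hAreg
    (hpruf A hA hAreg (ringKrullDim_quotient_le_zero_iff.2 hAmax))
  have ha : a ∈ R⁰ := by
    obtain ⟨t, ht, htr⟩ := hAreg
    obtain ⟨c, rfl⟩ := Ideal.mem_span_singleton.1 ht
    exact (mul_mem_nonZeroDivisors.1 htr).1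
  have hprinc : ∀ I : Ideal R, I.FG → (∃ n : ℕ, a ^ n ∈ I) → ∃ b, I = Ideal.span {b} := by
    rintro I hI ⟨n, hn⟩
    have hIreg : ∃ r ∈ I, r ∈ R⁰ := ⟨a ^ n, hn, pow_mem ha n⟩
    refine exists_eq_span_of_isQInvertible hsl hIreg (hpruf I hI hIreg ?_)
    refine ringKrullDim_quotient_le_zero_iff.2 fun P hP hIP => hAmax P hP ?_
    rw [Ideal.span_singleton_le_iff_mem]
    exact hP.mem_of_pow_mem n (hIP hn)
  set Q : Ideal R := ⨅ k : ℕ, (Ideal.span {a}) ^ (k + 1) with hQ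
  have hmemQ : ∀ x, x ∈ Q ↔ ∀ k : ℕ, a ^ k ∣ x := by
    intro x
    simp only [hQ, Submodule.mem_iInf, Ideal.span_singleton_pow, Ideal.mem_span_singleton]
    refine ⟨fun h k => ?_, fun h k => h (k + 1)⟩
    exact (pow_dvd_pow a k.le_succ).trans (h k)
  let π := Ideal.Quotient.mk Q
  have hπ : Function.Surjective π := Ideal.Quotient.mk_surjective
  have hmaxcomap : ∀ M : Ideal (R ⧸ Q), M.IsMaximal → (M.comap π).IsMaximal := fun M hM =>
    Ideal.comap_isMaximal_of_surjective π hπ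
  have hslS : IsSemilocalRing (R ⧸ Q) :=
    Set.Finite.of_injOn (f := fun M : Ideal (R ⧸ Q) => M.comap π) (t := {I : Ideal R | I.IsMaximal})
      (fun M hM => hmaxcomap M hM) (Ideal.comap_injective_of_surjective π hπ).injOn hsl
  have haS : π a ∈ (R ⧸ Q)⁰ := by
    rw [mem_nonZeroDivisors_iff_right]
    intro y hy
    obtain ⟨x, rfl⟩ := hπ y
    rw [← map_mul] at hy
    have hy' := (hmemQ _).1 (Ideal.Quotient.eq_zero_iff_mem.1 hy)
    refine Ideal.Quotient.eq_zero_iff_mem.2 ((hmemQ _).2 fun k => ?_)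
    obtain ⟨c, hc⟩ := hy' (k + 1)
    refine ⟨c, sub_eq_zero.1 ((mul_right_mem_nonZeroDivisors_eq_zero_iff ha).1 ?_)⟩
    linear_combination hc
  have haMS : ∀ M : Ideal (R ⧸ Q), M.IsMaximal → π a ∈ M := fun M hM =>
    hAM _ (hmaxcomap M hM) (Ideal.mem_span_singleton_self a)
  have hmaxS : ∀ P : Ideal (R ⧸ Q), P.IsPrime → π a ∈ P → P.IsMaximal := by
    intro P hP haP
    have h1 : (P.comap π).IsMaximal := hAmax _ (Ideal.comap_isPrime _ _) (by
      rw [Ideal.span_singleton_le_iff_mem]; exact haP)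
    exact isMaximal_of_comap hπ hP h1
  have hprincS : ∀ I : Ideal (R ⧸ Q), I.FG → (∃ n : ℕ, π a ^ n ∈ I) →
      ∃ b, I = Ideal.span {b} := by
    classical
    rintro I ⟨s, rfl⟩ ⟨n, hn⟩
    -- Lift the generators and adjoin `a ^ n`, which changes nothing modulo `Q`.
    choose g hg using hπ
    have himg : Ideal.span (s : Set (R ⧸ Q)) =
        (Ideal.span (↑(insert (a ^ n) (s.image g)) : Set R)).map π := by
      rw [Ideal.map_span, Finset.coe_insert, Finset.coe_image, Set.image_insert_eq,
        ← Set.image_comp, map_pow]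
      have : (π ∘ g) '' (s : Set (R ⧸ Q)) = s := by
        have : π ∘ g = id := funext hg
        rw [this, Set.image_id]
      rw [this, Ideal.span_insert, eq_comm, sup_eq_right, Ideal.span_singleton_le_iff_mem]
      exact hn
    obtain ⟨b, hb⟩ := hprinc _ ⟨insert (a ^ n) (s.image g), rfl⟩
      ⟨n, Ideal.subset_span (by simp)⟩
    exact ⟨π b, by rw [himg, hb, Ideal.map_span, Set.image_singleton]⟩
  have hbotS : ∀ x : R ⧸ Q, (∀ k : ℕ, π a ^ k ∣ x) → x = 0 := by
    intro y hy
    obtain ⟨x, rfl⟩ := hπ y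
    refine Ideal.Quotient.eq_zero_iff_mem.2 ((hmemQ _).2 fun k => ?_)
    obtain ⟨z, hz⟩ := hy k
    obtain ⟨c, rfl⟩ := hπ z
    rw [← map_pow, ← map_mul] at hz
    -- `x` is congruent to a multiple of `a ^ k` modulo `Q ⊆ (a ^ k)`.
    have h1 := (hmemQ _).1 (Ideal.Quotient.eq.1 hz) k
    exact (dvd_sub_left (dvd_mul_right _ _)).1 h1
  obtain ⟨h1, h2, h3, h4⟩ := structure_of_dichotomy hslS haS haMS hmaxS
    (fun x k => hprincS _ (Submodule.fg_span (Set.toFinite _)) ⟨k, Ideal.subset_span (by simp)⟩) hbotS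
  refine ⟨h1, h2, ?_, h3, h4⟩
  intro I hI _ hdim
  obtain ⟨n, hn⟩ : π a ∈ I.radical := by
    rw [Ideal.radical_eq_sInf, Submodule.mem_sInf]
    rintro P ⟨hIP, hP⟩
    exact haMS P (ringKrullDim_quotient_le_zero_iff.1 hdim P hP hIP)
  obtain ⟨b, rfl⟩ := hprincS I hI ⟨n, hn⟩
  obtain ⟨c, hc⟩ := Ideal.mem_span_singleton.1 hn
  have hbc : b * c ∈ (R ⧸ Q)⁰ := hc ▸ pow_mem haS n
  exact isQInvertible_span_singleton (mul_mem_nonZeroDivisors.1 hbc).1
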